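/- Let A be a unital C*-algebra and for positive a, b ∈ A define d_W(a,b) = inf { r > 0 : for all t > 0, (a − t − r)_+ ≾ (b − t)_+ and (b − t − r)_+ ≾ (a − t)_+ }, where ≾ denotes Cuntz subequivalence. Then for all positive a, b ∈ A, d_W(a,b) ≤ d_U(a,b) ≤ ‖a − b‖, where d_U(a,b) = inf over unitaries u of ‖u a u* − b‖. -/

import Mathlib

open Filter Topology

/-- The distance between unitary orbits. -/
noncomputable def dU {A : Type*} [CStarAlgebra A] (a b : A) : ℝ :=
  sInf {r : ℝ | ∃ u ∈ unitary A, r = ‖u * a * star u - b‖}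

/-- `cut t a = (a - t)₊`, the positive part of `a - t·1`. -/
noncomputable def cut {A : Type*} [CStarAlgebra A] (t : ℝ) (a : A) : A :=
  cfc (fun x : ℝ => max (x - t) 0) a

/-- Cuntz subequivalence (within the algebra). -/
def CuntzLE {A : Type*} [CStarAlgebra A] (a b : A) : Prop :=
  ∃ v : ℕ → A, Tendsto (fun k => ‖a - v k * b * star (v k)‖) atTop (𝓝 0)

/-- The Cuntz pseudometric `d_W`. -/
noncomputable def dW {A : Type*} [CStarAlgebra A] (a b : A) : ℝ :=
  sInf {r : ℝ | 0 < r ∧ ∀ t : ℝ, 0 < t →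
    CuntzLE (cut (t + r) a) (cut t b) ∧ CuntzLE (cut (t + r) b) (cut t a)}

theorem cuntzLE_of_eps {A : Type*} [CStarAlgebra A] {a b : A}
    (h : ∀ ε : ℝ, 0 < ε → ∃ v : A, ‖a - v * b * star v‖ ≤ ε) : CuntzLE a b := by
  choose v hv using fun n : ℕ => h (1 / ((n : ℝ) + 1)) (by positivity)
  exact ⟨v, squeeze_zero (fun _ => norm_nonneg _) hv tendsto_one_div_add_atTop_nhds_zero_nat⟩

theorem CuntzLE.eps {A : Type*} [CStarAlgebra A] {a b : A} (h : CuntzLE a b)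
    (ε : ℝ) (hε : 0 < ε) : ∃ v : A, ‖a - v * b * star v‖ ≤ ε := by
  obtain ⟨v, hv⟩ := h
  obtain ⟨n, hn⟩ := (hv.eventually (gt_mem_nhds hε)).exists
  exact ⟨v n, hn.le⟩

theorem CuntzLE.trans' {A : Type*} [CStarAlgebra A] {a b c : A} (h : CuntzLE a b)
    (h2 : CuntzLE b c) : CuntzLE a c := by
  refine cuntzLE_of_eps fun ε hε => ?_
  obtain ⟨v, hv⟩ := h.eps (ε / 2) (by positivity)
  obtain ⟨w, hw⟩ := h2.eps (ε / 2 / (‖v‖ * ‖v‖ + 1)) (by positivity)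
  refine ⟨v * w, ?_⟩
  have e : a - v * w * c * star (v * w)
      = (a - v * b * star v) + v * (b - w * c * star w) * star v := by
    rw [star_mul]; noncomm_ring
  rw [e]
  have h3 : ‖v * (b - w * c * star w) * star v‖ ≤ ε / 2 := by
    calc _ ≤ ‖v‖ * ‖b - w * c * star w‖ * ‖star v‖ := norm_mul₃_le
      _ = (‖v‖ * ‖v‖) * ‖b - w * c * star w‖ := by rw [norm_star]; ring
      _ ≤ (‖v‖ * ‖v‖ + 1) * (ε / 2 / (‖v‖ * ‖v‖ + 1)) := by gcongr; linarith
      _ = ε / 2 := by field_simp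
  linarith [norm_add_le (a - v * b * star v) (v * (b - w * c * star w) * star v)]

theorem cuntzLE_conj {A : Type*} [CStarAlgebra A] (g b : A) : CuntzLE (g * b * star g) b :=
  cuntzLE_of_eps fun ε hε => ⟨g, by simpa using hε.le⟩

theorem cuntzLE_of_le {A : Type*} [CStarAlgebra A] [PartialOrder A] [StarOrderedRing A]
    {p q : A} (hp : 0 ≤ p) (hpq : p ≤ q) : CuntzLE p q := by
  refine cuntzLE_of_eps fun ε hε => ?_
  have hq : 0 ≤ q := hp.trans hpq
  have hspec : ∀ x ∈ spectrum ℝ q, 0 ≤ x := fun x hx => spectrum_nonneg_of_nonneg hq hx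
  have hpos : ∀ x ∈ spectrum ℝ q, 0 < x + ε := fun x hx => by linarith [hspec x hx]
  obtain ⟨g, hg0, hcont⟩ : ∃ g : ℝ → ℝ, (∀ x ∈ spectrum ℝ q, g x * g x = (x + ε)⁻¹) ∧
      ContinuousOn g (spectrum ℝ q) := by
    refine ⟨fun x : ℝ => (√(x + ε))⁻¹, fun x hx => ?_, ?_⟩
    · change (√(x + ε))⁻¹ * (√(x + ε))⁻¹ = (x + ε)⁻¹
      rw [← mul_inv, Real.mul_self_sqrt (hpos x hx).le]
    · have h1 : Continuous fun x : ℝ => √(x + ε) := by fun_prop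
      exact ContinuousOn.inv₀ h1.continuousOn fun x hx => (Real.sqrt_pos.2 (hpos x hx)).ne'
  have hid : ContinuousOn (fun x : ℝ => x) (spectrum ℝ q) := continuousOn_id
  obtain ⟨w, hw⟩ : ∃ w : A, w = cfc g q := ⟨_, rfl⟩
  have hwsa : star w = w := by
    rw [hw]; exact (cfc_predicate (R := ℝ) _ q : IsSelfAdjoint (cfc g q))
  have hqid : cfc (fun x : ℝ => x) q = q := cfc_id' ℝ q
  have hwqw : w * q * w = cfc (fun x : ℝ => g x * x * g x) q := by
    rw [cfc_mul (fun x : ℝ => g x * x) g q (hcont.mul hid) hcont,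
      cfc_mul g (fun x : ℝ => x) q hcont hid, hqid, hw]
  have hww : w * w = cfc (fun x : ℝ => g x * g x) q := by
    rw [cfc_mul g g q hcont hcont, hw]
  have hone : w * q * w = 1 - ε • (w * w) := by
    rw [hwqw, hww, ← cfc_smul ε (fun x : ℝ => g x * g x) q (hcont.mul hcont),
      ← cfc_const_one ℝ q, ← cfc_sub (fun _ : ℝ => (1 : ℝ)) (fun x : ℝ => ε • (g x * g x)) q
        continuousOn_const ((hcont.mul hcont).const_smul ε)]
    refine cfc_congr fun x hx => ?_
    have h0 := hpos x hx
    simp only [smul_eq_mul]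
    rw [mul_right_comm, hg0 x hx]
    field_simp
    ring
  have hnorm : ‖w * q * w‖ ≤ 1 := by
    rw [hwqw]
    refine norm_cfc_le zero_le_one fun x hx => ?_
    have h0 := hpos x hx
    have h1 := hspec x hx
    rw [mul_right_comm, hg0 x hx, Real.norm_of_nonneg (by positivity), inv_mul_le_iff₀ h0]
    linarith
  set h : A := CFC.sqrt p with hh
  have hhsa : star h = h := IsSelfAdjoint.of_nonneg (CFC.sqrt_nonneg p)
  have hhh : h * h = p := CFC.sqrt_mul_sqrt_self p hp
  refine ⟨h * w, ?_⟩
  have e : p - h * w * q * star (h * w) = ε • ((h * w) * star (h * w)) := by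
    rw [star_mul, hwsa, hhsa]
    have : h * w * q * (w * h) = h * (w * q * w) * h := by noncomm_ring
    rw [this, hone, mul_sub, sub_mul, mul_one, hhh, mul_smul_comm, smul_mul_assoc, sub_sub_cancel]
    simp only [mul_assoc]
  rw [e, norm_smul, Real.norm_of_nonneg hε.le, CStarRing.norm_self_mul_star,
    ← CStarRing.norm_star_mul_self, star_mul, hwsa, hhsa]
  have e2 : w * h * (h * w) = w * p * w := by rw [← hhh]; noncomm_ring
  rw [e2]
  have hwsa' : IsSelfAdjoint w := hwsa
  have h4 : w * p * w ≤ w * q * w := hwsa'.conjugate_le_conjugate hpq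
  have h5 : 0 ≤ w * p * w := hwsa'.conjugate_nonneg hp
  have h6 := CStarAlgebra.norm_le_norm_of_nonneg_of_le h5 h4
  nlinarith

theorem cut_nonneg' {A : Type*} [CStarAlgebra A] [PartialOrder A] [StarOrderedRing A]
    (s : ℝ) (a : A) : 0 ≤ cut s a :=
  cfc_nonneg fun _ _ => le_max_right _ _

theorem cut_le_cube {A : Type*} [CStarAlgebra A] [PartialOrder A] [StarOrderedRing A]
    (s : ℝ) (a : A) : CuntzLE (cut s a) (cut s a * cut s a * cut s a) := by
  refine cuntzLE_of_eps fun ε hε => ?_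
  have hpos : ∀ x : ℝ, 0 < max (x - s) 0 + ε / 2 := fun x => by
    linarith [le_max_right (x - s) 0]
  have hc : Continuous (fun x : ℝ => (max (x - s) 0 + ε / 2)⁻¹) :=
    Continuous.inv₀ (by fun_prop) fun x => (hpos x).ne'
  have hco := hc.continuousOn (s := spectrum ℝ a)
  have hf : Continuous (fun x : ℝ => max (x - s) 0) := by fun_prop
  obtain ⟨f, hfe⟩ : ∃ f : ℝ → ℝ, f = fun x : ℝ => max (x - s) 0 := ⟨_, rfl⟩
  obtain ⟨g, hge⟩ : ∃ g : ℝ → ℝ, g = fun x : ℝ => (max (x - s) 0 + ε / 2)⁻¹ := ⟨_, rfl⟩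
  rw [← hge] at hco
  have hfo : ContinuousOn f (spectrum ℝ a) := by rw [hfe]; exact hf.continuousOn
  have hsa : star (cfc g a) = cfc g a := (cfc_predicate (R := ℝ) _ a : IsSelfAdjoint (cfc g a))
  refine ⟨cfc g a, ?_⟩
  have hcut : cut s a = cfc f a := by rw [hfe]; rfl
  have e0 : cfc f a - cfc g a * (cfc f a * cfc f a * cfc f a) * cfc g a
      = cfc (fun x : ℝ => f x - g x * (f x * f x * f x) * g x) a := by
    have h3 := (hfo.mul hfo).mul hfo
    rw [cfc_sub f (fun x : ℝ => g x * (f x * f x * f x) * g x) a hfo ((hco.mul h3).mul hco),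
      cfc_mul (fun x : ℝ => g x * (f x * f x * f x)) g a (hco.mul h3) hco,
      cfc_mul g (fun x : ℝ => f x * f x * f x) a hco h3,
      cfc_mul (fun x : ℝ => f x * f x) f a (hfo.mul hfo) hfo,
      cfc_mul f f a hfo hfo]
  rw [hsa, hcut, e0]
  refine norm_cfc_le hε.le fun x hx => ?_
  have h1 := hpos x
  have h0 := le_max_right (x - s) 0
  rw [hfe, hge]
  beta_reduce
  generalize max (x - s) 0 = f at h1 h0
  have e : f - (f + ε / 2)⁻¹ * (f * f * f) * (f + ε / 2)⁻¹
      = (f * (f * ε + ε ^ 2 / 4)) / (f + ε / 2) ^ 2 := by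
    field_simp
    ring
  rw [e, Real.norm_of_nonneg (by positivity), div_le_iff₀ (by positivity)]
  nlinarith [mul_nonneg h0 hε.le, mul_nonneg (mul_nonneg h0 hε.le) hε.le, pow_pos hε 3]

theorem cut_cube_eq {A : Type*} [CStarAlgebra A]
    (s : ℝ) (a : A) (ha : IsSelfAdjoint a) :
    cut s a * (a - algebraMap ℝ A s) * cut s a = cut s a * cut s a * cut s a := by
  have e : a - algebraMap ℝ A s = cfc (fun x : ℝ => x - s) a := by
    rw [cfc_sub .., cfc_id' ℝ a, cfc_const s a]
  rw [e, cut, ← cfc_mul .., ← cfc_mul .., ← cfc_mul .., ← cfc_mul ..]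
  refine cfc_congr fun x _ => ?_
  rcases le_total (x - s) 0 with h | h
  · simp [max_eq_right h]
  · simp [max_eq_left h]

theorem cut_key {A : Type*} [CStarAlgebra A] [PartialOrder A] [StarOrderedRing A]
    (a b : A) (ha : IsSelfAdjoint a) (hb : IsSelfAdjoint b) (r t : ℝ) (hr : ‖a - b‖ ≤ r) :
    CuntzLE (cut (t + r) a) (cut t b) := by
  have hle : a - algebraMap ℝ A (t + r) ≤ cut t b := by
    have h1 : a - b ≤ algebraMap ℝ A r :=
      (ha.sub hb).le_algebraMap_norm_self.trans (algebraMap_mono A hr)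
    have h2 : b - algebraMap ℝ A t ≤ cut t b := by
      have e : b - algebraMap ℝ A t = cfc (fun x : ℝ => x - t) b := by
        rw [cfc_sub .., cfc_id' ℝ b, cfc_const t b]
      rw [e, cut]
      exact cfc_mono fun x _ => le_max_left _ _
    calc a - algebraMap ℝ A (t + r)
        = (a - b) + (b - algebraMap ℝ A t) - algebraMap ℝ A r := by rw [map_add]; abel
      _ ≤ algebraMap ℝ A r + cut t b - algebraMap ℝ A r := by gcongr
      _ = cut t b := by abel
  have hc := cut_nonneg' (t + r) a
  have hcsa : IsSelfAdjoint (cut (t + r) a) := .of_nonneg hc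
  have h3 := hcsa.conjugate_le_conjugate hle
  rw [cut_cube_eq _ _ ha] at h3
  have h4 : 0 ≤ cut (t + r) a * cut (t + r) a * cut (t + r) a := hcsa.conjugate_nonneg hc
  have h5 := cuntzLE_conj (cut (t + r) a) (cut t b)
  rw [hcsa.star_eq] at h5
  exact (cut_le_cube _ _).trans' ((cuntzLE_of_le h4 h3).trans' h5)

theorem cut_conj {A : Type*} [CStarAlgebra A] (u : unitary A) (s : ℝ) (a : A)
    (ha : IsSelfAdjoint a) :
    (u : A) * cut s a * star (u : A) = cut s ((u : A) * a * star (u : A)) := by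
  have hcont : Continuous (Unitary.conjStarAlgAut ℝ A u) := by
    change Continuous fun x : A => (u : A) * x * star (u : A)
    fun_prop
  exact StarAlgHomClass.map_cfc (S := ℝ) (Unitary.conjStarAlgAut ℝ A u)
    (fun x : ℝ => max (x - s) 0) a (by fun_prop) hcont ha (ha.conjugate (u : A))

/-- `d_W(a,b) ≤ d_U(a,b) ≤ ‖a - b‖` for positive elements of a unital C*-algebra. -/
theorem dW_le_dU_le_norm_sub {A : Type*} [CStarAlgebra A] [PartialOrder A] [StarOrderedRing A]
    (a b : A) (ha : 0 ≤ a) (hb : 0 ≤ b) :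
    dW a b ≤ dU a b ∧ dU a b ≤ ‖a - b‖ := by
  have hasa : IsSelfAdjoint a := .of_nonneg ha
  have hbsa : IsSelfAdjoint b := .of_nonneg hb
  constructor
  · refine le_csInf ⟨_, 1, one_mem _, rfl⟩ ?_
    rintro _ ⟨u, hu, rfl⟩
    refine le_of_forall_pos_le_add fun ε hε => ?_
    refine csInf_le ⟨0, fun r hr => hr.1.le⟩ ⟨by positivity, fun t _ => ?_⟩
    have hr : ‖u * a * star u - b‖ ≤ ‖u * a * star u - b‖ + ε := by linarith
    generalize ‖u * a * star u - b‖ + ε = r at hr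
    have hsa : IsSelfAdjoint (u * a * star u) := hasa.conjugate u
    have k1 := cut_key _ _ hsa hbsa r t hr
    have k2 := cut_key _ _ hbsa hsa r t (by rwa [norm_sub_rev])
    have c1 : ∀ s, cut s (u * a * star u) = u * cut s a * star u :=
      fun s => (cut_conj ⟨u, hu⟩ s a hasa).symm
    rw [c1] at k1 k2
    refine ⟨?_, k2.trans' (cuntzLE_conj _ _)⟩
    have h := cuntzLE_conj (star u) (u * cut (t + r) a * star u)
    have e : star u * (u * cut (t + r) a * star u) * star (star u) = cut (t + r) a := by
      have h1 : star u * u = 1 := Unitary.star_mul_self_of_mem hu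
      calc _ = (star u * u) * cut (t + r) a * (star u * u) := by
            rw [star_star]; noncomm_ring
        _ = _ := by rw [h1, one_mul, mul_one]
    rw [e] at h
    exact h.trans' k1
  · refine csInf_le ⟨0, ?_⟩ ⟨1, one_mem _, by simp⟩
    rintro _ ⟨u, _, rfl⟩
    exact norm_nonneg _
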